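/- Let H be a hypergraph of maximum degree 1 (its edges are mutually disjoint; edges of size 1 allowed) that has at least one vertex of degree 0 (an isolated vertex not contained in any edge). Then H is (Z₂×Z₂)-cordial. -/

import Mathlib

/-!
Only the sizes of the (disjoint) edges matter: a labeling amounts to a choice, for every edge, of
a multiset of labels whose cardinality is the size of the edge (`exists_labeling`).  Moreover one
isolated vertex is enough, since each further isolated vertex can be given a least used label
(`Balanced.extend`).  So it suffices to show that every multiset `L` of positive edge sizes is
`Realizable`, by induction on the sum of `L`, using two reductions.

* If some size is at least `5`, remove from that edge four vertices labeled by the four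
  different elements of `K4`; these sum to zero (`Realizable.add_four`).
* If four edges have sizes in `{1, 2, 3, 4}` with sum divisible by `4`, they can be labeled so that
  every element of `K4` is used equally often as a vertex label and exactly once as an edge label,
  and so they can be removed (`Realizable.add_perfect`, with the labelings listed in
  `perfectBlocks`).

By the Erdős–Ginzburg–Ziv theorem the second reduction applies as soon as there are seven edges.
Exactly eighty multisets of sizes in `{1, 2, 3, 4}` admit neither reduction, and `baseLabelings`
gives a labeling for each of them; the completeness of the list is checked by computation in
`irreducible_cases`.
-/

open Finset

open Finset

/-- The Klein four-group `Z₂ × Z₂`. -/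
abbrev K4 : Type := ZMod 2 × ZMod 2

/-- The edge label induced by a vertex labeling: the sum of the labels of the
vertices of the edge. -/
def edgeSum {V : Type*} (c : V → K4) (e : Finset V) : K4 :=
  ∑ v ∈ e, c v

/-- A labeling `c` of the vertex set `Vs` is `Z₂×Z₂`-friendly if any two label
classes differ in size by at most one. -/
def Friendly {V : Type*} [DecidableEq V] (Vs : Finset V) (c : V → K4) : Prop :=
  ∀ a b : K4,
    |((Vs.filter fun v => c v = a).card : ℤ) -
      ((Vs.filter fun v => c v = b).card : ℤ)| ≤ 1

/-- A hypergraph with vertex set `Vs` and edge set `E` is `Z₂×Z₂`-cordial if it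
admits a `Z₂×Z₂`-friendly vertex labeling whose induced edge label classes
differ in size by at most one. -/
def Cordial {V : Type*} [DecidableEq V] (Vs : Finset V) (E : Finset (Finset V)) : Prop :=
  ∃ c : V → K4, Friendly Vs c ∧
    ∀ a b : K4,
      |((E.filter fun e => edgeSum c e = a).card : ℤ) -
        ((E.filter fun e => edgeSum c e = b).card : ℤ)| ≤ 1

namespace KleinCordial

/-! ### Balanced multisets of labels -/

/-- Any two labels occur in `M` equally often up to one. -/
def Balanced (M : Multiset K4) : Prop := ∀ a b : K4, M.count a ≤ M.count b + 1

/-- Any two labels occur in `M` equally often. -/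
def Uniform (M : Multiset K4) : Prop := ∀ a b : K4, M.count a = M.count b

instance (M : Multiset K4) : Decidable (Balanced M) := by unfold Balanced; infer_instance

instance (M : Multiset K4) : Decidable (Uniform M) := by unfold Uniform; infer_instance

lemma Balanced.add_uniform {M N : Multiset K4} (hM : Balanced M) (hN : Uniform N) :
    Balanced (M + N) := by
  intro a b
  have h1 := hM a b
  have h2 := hN a b
  simp only [Multiset.count_add]
  omega

lemma Balanced.exists_cons {M : Multiset K4} (hM : Balanced M) : ∃ x, Balanced (x ::ₘ M) := by
  obtain ⟨x, -, hx⟩ := Finset.exists_min_image (Finset.univ : Finset K4) (fun a => M.count a)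
    Finset.univ_nonempty
  refine ⟨x, fun a b => ?_⟩
  have h1 := hM a b
  have h2 := hx b (Finset.mem_univ b)
  simp only [Multiset.count_cons]
  by_cases h : a = x
  · subst h
    split_ifs <;> omega
  · rw [if_neg h]
    omega

/-- Adding least used labels one after the other keeps a multiset of labels balanced. -/
lemma Balanced.extend {M : Multiset K4} (hM : Balanced M) (n : ℕ) :
    ∃ N : Multiset K4, Multiset.card N = n ∧ Balanced (N + M) := by
  induction n with
  | zero => exact ⟨0, rfl, by simpa using hM⟩
  | succ n ih =>
    obtain ⟨N, hN, hb⟩ := ih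
    obtain ⟨x, hx⟩ := hb.exists_cons
    exact ⟨x ::ₘ N, by simp [hN], by simpa using hx⟩

/-! ### Realizable multisets of edge sizes -/

/-- Disjoint edges whose sizes are listed in `L`, together with one isolated vertex, have a
cordial labeling.  An edge is represented by the multiset of the labels of its vertices, and `x` is
the label of the isolated vertex. -/
def Realizable (L : Multiset ℕ) : Prop :=
  ∃ S : Multiset (Multiset K4), S.map Multiset.card = L ∧ Balanced (S.map Multiset.sum) ∧
    ∃ x, Balanced (x ::ₘ S.join)

/-- Disjoint edges whose sizes are listed in `P` can be labeled with all vertex labels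
equally frequent and all edge labels equally frequent. -/
def Perfect (P : Multiset ℕ) : Prop :=
  ∃ S : Multiset (Multiset K4), S.map Multiset.card = P ∧ Uniform (S.map Multiset.sum) ∧
    Uniform S.join

lemma Realizable.add_perfect {L P : Multiset ℕ} (hL : Realizable L) (hP : Perfect P) :
    Realizable (P + L) := by
  obtain ⟨S, rfl, hs, x, hx⟩ := hL
  obtain ⟨T, rfl, ht, hj⟩ := hP
  refine ⟨S + T, by simp [add_comm], ?_, x, ?_⟩
  · rw [Multiset.map_add]
    exact hs.add_uniform ht
  · rw [Multiset.join_add, ← Multiset.cons_add]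
    exact hx.add_uniform hj

lemma Realizable.add_four {k : ℕ} {L : Multiset ℕ} (h : Realizable (k ::ₘ L)) :
    Realizable ((k + 4) ::ₘ L) := by
  obtain ⟨S, hS, hs, x, hx⟩ := h
  obtain ⟨M, hM, hMk⟩ := Multiset.mem_map.1 (hS ▸ Multiset.mem_cons_self k L)
  obtain ⟨T, rfl⟩ := Multiset.exists_cons_of_mem hM
  rw [Multiset.map_cons, hMk, Multiset.cons_inj_right] at hS
  have hsum : (Finset.univ : Finset K4).val.sum = 0 := by decide
  have hcard : Multiset.card (Finset.univ : Finset K4).val = 4 := by decide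
  have hU : Uniform (Finset.univ : Finset K4).val := by decide
  refine ⟨(M + Finset.univ.val) ::ₘ T, ?_, ?_, x, ?_⟩
  · rw [Multiset.map_cons, Multiset.card_add, hMk, hcard, hS]
  · rw [Multiset.map_cons, Multiset.sum_add, hsum, add_zero]
    rwa [Multiset.map_cons] at hs
  · have := hx.add_uniform hU
    convert this using 1
    simp only [Multiset.join_cons, Multiset.cons_add]
    rw [add_right_comm]

/-! ### Explicit labelings of few small edges -/

/-- The zero of `K4`. -/
abbrev o : K4 := (0, 0)

/-- The first of the three involutions of `K4`. -/
abbrev a : K4 := (0, 1)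

/-- The second of the three involutions of `K4`. -/
abbrev b : K4 := (1, 0)

/-- The third of the three involutions of `K4`, equal to `a + b`. -/
abbrev c : K4 := (1, 1)

/-- The multiset of multisets underlying a list of lists. -/
def toEdges (T : List (List K4)) : Multiset (Multiset K4) :=
  Multiset.ofList (T.map Multiset.ofList)

lemma toEdges_map_card (T : List (List K4)) :
    (toEdges T).map Multiset.card = (T.map List.length : List ℕ) := by
  rw [toEdges, Multiset.map_coe, List.map_map]
  rfl

/-- Labelings, uniform on vertices and on edges, of four edges with sizes in `{1, 2, 3, 4}`: one
for each multiset of four sizes with sum divisible by `4`. -/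
def perfectBlocks : List (List (List K4)) :=
  [[[o], [a], [b], [c]], [[o], [a], [o, b], [a, b, c, c]], [[o], [a], [o, a, b], [b, c, c]],
   [[o], [o, a], [a, b], [b, c, c]], [[o], [o, o, a], [a, b, b, b], [a, c, c, c]],
   [[o, o], [a, b], [a, c], [b, c]], [[o, o], [o, a], [a, b, b, b], [a, c, c, c]],
   [[o, o], [o, a, b], [a, a, b], [b, c, c, c]], [[o, o, o], [a, a, a], [b, b, b], [c, c, c]],
   [[o, o, o, o], [a, a, a, b], [a, b, b, c], [b, c, c, c]]]

/-- Cordial labelings (the label of the single isolated vertex is omitted) for all multisets of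
sizes in `{1, 2, 3, 4}` that contain no four sizes with sum divisible by `4`. -/
def baseLabelings : List (List (List K4)) :=
  [[], [[o]], [[o, a]], [[o, a, b]], [[o, o, a, b]], [[o], [a]], [[o], [a, b]], [[o], [o, a, b]],
   [[o], [o, a, a, b]], [[o, o], [a, b]], [[o, o], [a, a, b]], [[o, o], [a, a, b, c]],
   [[o, o, a], [a, b, c]], [[o, o, a], [a, b, b, c]], [[o, o, o, a], [a, b, b, c]],
   [[o], [a], [b]], [[o], [a], [o, b]], [[o], [a], [o, a, b]], [[o], [a], [o, b, b, c]],
   [[o], [o, a], [a, b]], [[o], [o, a], [b, b, c]], [[o], [o, a], [a, b, b, c]],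
   [[o], [o, a, b], [a, c, c]], [[o], [o, o, a], [a, b, b, c]], [[o], [o, o, a, b], [a, a, b, c]],
   [[o, o], [a, b], [a, c]], [[o, o], [a, b], [a, c, c]], [[o, o], [o, a], [a, b, b, c]],
   [[o, o], [o, a, b], [a, c, c]], [[o, o], [o, a, b], [a, a, b, c]],
   [[o, o], [o, a, a, b], [a, b, c, c]], [[o, o, o], [a, a, a], [b, b, c]],
   [[o, o, o], [a, a, b], [a, b, c, c]], [[o, o, o], [a, a, a, b], [b, c, c, c]],
   [[o, o, o, o], [a, a, a, b], [b, c, c, c]], [[o], [a], [b], [o, c]],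
   [[o], [a], [b], [o, a, b]], [[o], [a], [b], [a, b, c, c]], [[o], [a], [o, b], [a, b]],
   [[o], [a], [a, b], [b, c, c]], [[o], [a], [o, o, b], [a, b, c, c]],
   [[o], [a], [o, o, a, b], [a, b, b, c]], [[o], [a, b], [a, c], [b, c]],
   [[o], [o, a], [o, b], [a, b, c, c]], [[o], [o, a], [o, a, b], [b, c, c]],
   [[o], [o, a], [o, a, b], [a, b, b, c]], [[o], [o, a], [a, b, b, b], [a, c, c, c]],
   [[o], [o, o, a], [a, a, b], [b, b, c]], [[o], [o, a, b], [a, a, b], [b, c, c, c]],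
   [[o], [o, o, o, a], [a, b, b, b], [a, c, c, c]], [[o, o], [o, a], [a, b], [b, c, c]],
   [[o, o], [o, a], [a, b], [a, b, b, c]], [[o, o], [o, a], [a, a, b], [b, b, c]],
   [[o, o], [a, b], [a, a, b], [b, c, c, c]], [[o, o], [a, a, a], [b, b, b], [c, c, c]],
   [[o, o], [o, o, a], [a, b, b, b], [a, c, c, c]],
   [[o, o], [o, o, a, b], [a, a, a, c], [b, b, b, c]],
   [[o, o, o], [o, a, b], [a, a, b], [b, c, c, c]],
   [[o, o, o], [o, a, b], [a, a, a, c], [b, b, b, c]],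
   [[o, o, o], [a, a, a, b], [a, b, b, c], [b, c, c, c]], [[o], [a], [b], [o, c], [a, b]],
   [[o], [o], [a], [a, b], [b, c, c]], [[o], [o], [a], [o, a, b], [a, b, b, c]],
   [[o], [o], [a], [a, b, b, b], [a, c, c, c]], [[o], [o], [a, b], [a, c], [b, c]],
   [[o], [o], [o, o, a, b], [a, a, a, c], [b, b, b, c]],
   [[o], [o, a], [o, b], [a, b], [a, b, c, c]], [[o], [o, o], [a, a, a], [b, b, b], [c, c, c]],
   [[o], [o, o], [a, a, a, b], [a, b, b, c], [b, c, c, c]],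
   [[o], [o, o, o], [a, a, a], [b, b, b], [a, b, c, c]],
   [[o, o], [o, a], [o, a], [b, b, b], [c, c, c]],
   [[o, o], [o, o], [a, b], [a, a, b], [b, c, c, c]],
   [[o, o], [o, o], [a, a, a], [b, b, b], [c, c, c]],
   [[o, o], [o, o, o], [a, a, a, b], [a, b, b, c], [b, c, c, c]],
   [[o, o, o], [o, o, a], [a, a, b], [a, b, b, b], [a, c, c, c]],
   [[o, o, o], [o, o, a], [a, a, a, b], [a, b, b, c], [b, b, c, c]],
   [[o], [o], [a], [o, b], [a, b], [a, c]],
   [[o], [o], [a], [o, o, a, b], [a, b, b, b], [a, c, c, c]],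
   [[o, o], [o, o], [a, b], [a, a, a], [b, b, b], [c, c, c]],
   [[o, o, o], [o, o, o], [a, a, a], [a, b, b, b], [a, b, b, c], [a, c, c, c]]]

lemma perfect_of_mem {T : List (List K4)} (hT : T ∈ perfectBlocks) :
    Perfect (T.map List.length : List ℕ) := by
  have key : ∀ T ∈ perfectBlocks, Uniform ((toEdges T).map Multiset.sum) ∧
      Uniform (toEdges T).join := by decide +kernel
  exact ⟨toEdges T, toEdges_map_card T, key T hT⟩

lemma realizable_of_mem {T : List (List K4)} (hT : T ∈ baseLabelings) :
    Realizable (T.map List.length : List ℕ) := by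
  have key : ∀ T ∈ baseLabelings, Balanced ((toEdges T).map Multiset.sum) ∧
      ∃ x, Balanced (x ::ₘ (toEdges T).join) := by decide +kernel
  exact ⟨toEdges T, toEdges_map_card T, key T hT⟩

set_option synthInstance.maxSize 1000 in
/-- Among at most three edges of each size `1, 2, 3, 4` there is a perfect block, or
their sizes are those of a labeling in `baseLabelings`.  Here `n₁, n₂, n₃, n₄` are the numbers of
edges of the respective sizes. -/
lemma irreducible_cases : ∀ n₁ < 4, ∀ n₂ < 4, ∀ n₃ < 4, ∀ n₄ < 4,
    (∃ T ∈ perfectBlocks, (T.map List.length).count 1 ≤ n₁ ∧ (T.map List.length).count 2 ≤ n₂ ∧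
      (T.map List.length).count 3 ≤ n₃ ∧ (T.map List.length).count 4 ≤ n₄) ∨
    (∃ T ∈ baseLabelings, (T.map List.length).count 1 = n₁ ∧ (T.map List.length).count 2 = n₂ ∧
      (T.map List.length).count 3 = n₃ ∧ (T.map List.length).count 4 = n₄) := by
  decide +kernel

lemma four_equal : ∀ k ∈ Finset.Icc 1 4, ∃ T ∈ perfectBlocks,
    (T.map List.length) = List.replicate 4 k := by
  decide +kernel

lemma sizes_small : ∀ T ∈ perfectBlocks ++ baseLabelings, ∀ k ∈ T.map List.length,
    1 ≤ k ∧ k ≤ 4 := by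
  decide +kernel

lemma perfectBlocks_ne_nil : ∀ T ∈ perfectBlocks, 0 < (T.map List.length).sum := by
  decide +kernel

/-- A multiset of sizes in `{1, 2, 3, 4}` contains the sizes of a perfect block or is the multiset
of sizes of a labeling in `baseLabelings`. -/
lemma block_or_base {L : Multiset ℕ} (hL : ∀ k ∈ L, 1 ≤ k ∧ k ≤ 4) :
    (∃ T ∈ perfectBlocks, ((T.map List.length : List ℕ) : Multiset ℕ) ≤ L) ∨
    (∃ T ∈ baseLabelings, ((T.map List.length : List ℕ) : Multiset ℕ) = L) := by
  by_cases h4 : ∃ k ∈ Finset.Icc 1 4, 4 ≤ L.count k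
  · obtain ⟨k, hk, hc⟩ := h4
    obtain ⟨T, hT, he⟩ := four_equal k hk
    refine Or.inl ⟨T, hT, ?_⟩
    rw [he, Multiset.coe_replicate]
    exact Multiset.le_count_iff_replicate_le.1 hc
  · push Not at h4
    have hout : ∀ k, ¬(1 ≤ k ∧ k ≤ 4) → L.count k = 0 := fun k hk =>
      Multiset.count_eq_zero.2 fun h => hk (hL k h)
    have hout' : ∀ T ∈ perfectBlocks ++ baseLabelings, ∀ k, ¬(1 ≤ k ∧ k ≤ 4) →
        (T.map List.length).count k = 0 := fun T hT k hk =>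
      List.count_eq_zero.2 fun h => hk (sizes_small T hT k h)
    rcases irreducible_cases _ (h4 1 (by decide)) _ (h4 2 (by decide)) _ (h4 3 (by decide))
      _ (h4 4 (by decide)) with ⟨T, hT, h1, h2, h3, h4⟩ | ⟨T, hT, h1, h2, h3, h4⟩
    · refine Or.inl ⟨T, hT, Multiset.le_iff_count.2 fun k => ?_⟩
      rw [Multiset.coe_count]
      by_cases hk : 1 ≤ k ∧ k ≤ 4
      · obtain ⟨hk1, hk2⟩ := hk
        interval_cases k <;> assumption
      · rw [hout' T (by simp [hT]) k hk]
        exact Nat.zero_le _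
    · refine Or.inr ⟨T, hT, Multiset.ext.2 fun k => ?_⟩
      rw [Multiset.coe_count]
      by_cases hk : 1 ≤ k ∧ k ≤ 4
      · obtain ⟨hk1, hk2⟩ := hk
        interval_cases k <;> assumption
      · rw [hout' T (by simp [hT]) k hk, hout k hk]

theorem realizable_of_pos (L : Multiset ℕ) (hL : ∀ k ∈ L, 1 ≤ k) : Realizable L := by
  induction hn : L.sum using Nat.strong_induction_on generalizing L with
  | _ n ih =>
  subst hn
  by_cases hbig : ∃ k ∈ L, 5 ≤ k
  · obtain ⟨k, hk, hk5⟩ := hbig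
    obtain ⟨L', rfl⟩ := Multiset.exists_cons_of_mem hk
    obtain ⟨j, rfl⟩ := Nat.exists_eq_add_of_le' (show 4 ≤ k by omega)
    refine Realizable.add_four (ih _ ?_ (j ::ₘ L') ?_ rfl)
    · simp
    · intro i hi
      rcases Multiset.mem_cons.1 hi with rfl | hi
      · omega
      · exact hL i (Multiset.mem_cons_of_mem hi)
  · push Not at hbig
    rcases block_or_base (fun k hk => ⟨hL k hk, Nat.le_of_lt_succ (hbig k hk)⟩) with
      ⟨T, hT, hle⟩ | ⟨T, hT, rfl⟩
    · obtain ⟨L', rfl⟩ := Multiset.le_iff_exists_add.1 hle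
      refine Realizable.add_perfect (ih _ ?_ L' (fun k hk => hL k ?_) rfl) (perfect_of_mem hT)
      · have := perfectBlocks_ne_nil T hT
        rw [Multiset.sum_add, Multiset.sum_coe]
        omega
      · exact Multiset.mem_add.2 (Or.inr hk)
    · exact realizable_of_mem hT

/-! ### From label multisets to vertex labelings -/

lemma exists_map_eq {V : Type*} [DecidableEq V] (s : Finset V) (M : Multiset K4)
    (h : Multiset.card M = #s) : ∃ f : V → K4, s.val.map f = M := by
  induction s using Finset.induction_on generalizing M with
  | empty => exact ⟨fun _ => 0, (Multiset.card_eq_zero.1 h).symm⟩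
  | insert v s hv ih =>
    rw [Finset.card_insert_of_notMem hv] at h
    obtain ⟨x, hx⟩ := Multiset.card_pos_iff_exists_mem.1 (by omega : 0 < Multiset.card M)
    obtain ⟨N, rfl⟩ := Multiset.exists_cons_of_mem hx
    obtain ⟨f, rfl⟩ := ih N (by simpa using h)
    refine ⟨Function.update f v x, ?_⟩
    rw [Finset.insert_val_of_notMem hv, Multiset.map_cons, Function.update_self]
    congr 1
    refine Multiset.map_congr rfl fun w hw => Function.update_of_ne ?_ _ _
    rintro rfl
    exact hv hw

/-- Label multisets of the right cardinalities are realized by a vertex labeling. -/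
lemma exists_labeling {V : Type*} [DecidableEq V] (E : Finset (Finset V))
    (hE : ∀ e ∈ E, ∀ e' ∈ E, e ≠ e' → Disjoint e e') (S : Multiset (Multiset K4))
    (hS : S.map Multiset.card = E.val.map Finset.card) :
    ∃ f : V → K4, E.val.map (fun e => e.val.map f) = S := by
  induction E using Finset.induction_on generalizing S with
  | empty => exact ⟨fun _ => 0, by simpa [eq_comm] using hS⟩
  | insert e E he ih =>
    rw [Finset.insert_val_of_notMem he, Multiset.map_cons] at hS
    obtain ⟨M, hM, hMe⟩ := Multiset.mem_map.1 (hS ▸ Multiset.mem_cons_self _ _)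
    obtain ⟨T, rfl⟩ := Multiset.exists_cons_of_mem hM
    rw [Multiset.map_cons, hMe, Multiset.cons_inj_right] at hS
    obtain ⟨f, rfl⟩ := ih (fun e₁ h₁ e₂ h₂ => hE e₁ (Finset.mem_insert_of_mem h₁) e₂
      (Finset.mem_insert_of_mem h₂)) T hS
    obtain ⟨g, rfl⟩ := exists_map_eq e M hMe
    refine ⟨fun v => if v ∈ e then g v else f v, ?_⟩
    rw [Finset.insert_val_of_notMem he, Multiset.map_cons]
    congr 1
    · exact Multiset.map_congr rfl fun v hv => if_pos hv
    · refine Multiset.map_congr rfl fun e' he' => Multiset.map_congr rfl fun v hv => if_neg ?_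
      have hd := hE e (Finset.mem_insert_self _ _) e' (Finset.mem_insert_of_mem he')
        (fun h => he (h ▸ he'))
      exact fun h => Finset.disjoint_left.1 hd h hv

lemma card_filter_eq_count {α : Type*} (s : Finset α) (f : α → K4) (x : K4) :
    #{v ∈ s | f v = x} = (s.val.map f).count x := by
  rw [Multiset.count_map, Finset.card_def, Finset.filter_val]
  simp only [eq_comm]

lemma Balanced.abs_sub_le {M : Multiset K4} (hM : Balanced M) (x y : K4) :
    |((M.count x : ℕ) : ℤ) - ((M.count y : ℕ) : ℤ)| ≤ 1 := by
  have h1 := hM x y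
  have h2 := hM y x
  rw [abs_le]
  omega

end KleinCordial

open KleinCordial in
/-- Let `H` be a hypergraph of maximum degree 1 (every vertex lies in at most
one edge; edges are nonempty, possibly of size 1) that has at least one
isolated vertex.  Then `H` is `Z₂×Z₂`-cordial. -/
theorem matching_with_isolated_cordial {V : Type*} [DecidableEq V] (Vs : Finset V)
    (E : Finset (Finset V))
    (hsub : ∀ e ∈ E, e ⊆ Vs)
    (hne : ∀ e ∈ E, e.Nonempty)
    (hdeg : ∀ v ∈ Vs, ({e ∈ E | v ∈ e} : Finset (Finset V)).card ≤ 1)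
    (hiso : ∃ v ∈ Vs, ∀ e ∈ E, v ∉ e) :
    Cordial Vs E := by
  have hdisj : ∀ e ∈ E, ∀ e' ∈ E, e ≠ e' → Disjoint e e' := by
    intro e he e' he' hee
    refine Finset.disjoint_left.2 fun v hv hv' => hee ?_
    exact Finset.card_le_one.1 (hdeg v (hsub e he hv)) e (by simp [he, hv]) e' (by simp [he', hv'])
  obtain ⟨S, hS, hs, x, hx⟩ := realizable_of_pos (E.val.map Finset.card) (by
    intro k hk
    obtain ⟨e, he, rfl⟩ := Multiset.mem_map.1 hk
    exact Finset.card_pos.2 (hne e he))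
  obtain ⟨f, rfl⟩ := exists_labeling E hdisj S hS
  set U := Vs \ E.biUnion id with hU
  have hUpos : 0 < #U := by
    obtain ⟨v, hv, hvE⟩ := hiso
    exact Finset.card_pos.2 ⟨v, by simpa [hU, hv] using hvE⟩
  obtain ⟨N, hN, hNb⟩ := hx.extend (#U - 1)
  obtain ⟨g, hg⟩ := exists_map_eq U (x ::ₘ N) (by rw [Multiset.card_cons, hN]; omega)
  have hcE : ∀ e ∈ E, e.val.map (fun v => if v ∈ U then g v else f v) = e.val.map f := by
    intro e he
    refine Multiset.map_congr rfl fun v hv => if_neg ?_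
    intro h
    exact (Finset.mem_sdiff.1 h).2 (Finset.mem_biUnion.2 ⟨e, he, hv⟩)
  have hcU : U.val.map (fun v => if v ∈ U then g v else f v) = x ::ₘ N := by
    rw [← hg]
    exact Multiset.map_congr rfl fun v hv => if_pos hv
  refine ⟨fun v => if v ∈ U then g v else f v, ?_, ?_⟩
  · have hcount : ∀ y, #{v ∈ Vs | (if v ∈ U then g v else f v) = y} =
        (N + x ::ₘ (E.val.map fun e => e.val.map f).join).count y := by
      intro y
      have hVs : Vs = E.biUnion id ∪ U := by
        exact (Finset.union_sdiff_of_subset (Finset.biUnion_subset.2 hsub)).symm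
      have hd : Disjoint (E.biUnion id) U := Finset.disjoint_sdiff
      have hval : Vs.val = (E.val.map Finset.val).join + U.val := by
        conv_lhs => rw [hVs, ← Finset.disjUnion_eq_union _ _ hd, Finset.disjUnion_val]
        rw [← Finset.disjiUnion_eq_biUnion E id (fun e he e' he' h => hdisj e he e' he' h)]
        rfl
      rw [card_filter_eq_count, hval, Multiset.map_add, hcU, Multiset.map_join,
        Multiset.map_map, Multiset.map_congr (g := fun e => e.val.map f) rfl hcE]
      congr 1
      rw [← Multiset.singleton_add, ← Multiset.singleton_add]
      abel
    intro y z
    rw [hcount, hcount]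
    exact hNb.abs_sub_le y z
  · have hcount : ∀ y, #{e ∈ E | edgeSum (fun v => if v ∈ U then g v else f v) e = y} =
        ((E.val.map fun e => e.val.map f).map Multiset.sum).count y := by
      intro y
      rw [card_filter_eq_count, Multiset.map_map]
      congr 1
      exact Multiset.map_congr rfl fun e he => congrArg Multiset.sum (hcE e he)
    intro y z
    rw [hcount, hcount]
    exact hs.abs_sub_le y z
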